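/- arXiv:0912.2213 — 9 statements merged into one kernel-verified Lean document; each statement's English description precedes it below -/
import Mathlib

section
/- Let N, M be positive integers and let I_n^t, V_n^t (n, t ∈ ℤ) be complex numbers that are N-periodic in n (I_{n+N}^t = I_n^t, V_{n+N}^t = V_n^t). Then the following are equivalent: (a) for all n, t ∈ ℤ, I_n^{t+M} = I_n^t + V_n^t − V_{n−1}^{t+1} and V_n^{t+1}·I_n^{t+M} = I_{n+1}^t·V_n^t; (b) for all t ∈ ℤ and all nonzero y ∈ ℂ, L_{t+1}(y)·R_{t+M}(y) = R_t(y)·L_t(y). -/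
/-! The matrix `L_t(y)` is `1 + P · diag(V^t)` and `R_t(y)` is `diag(I^t) + S`, where `S` is the
cyclic shift weighted by `y` and `P = S⁻¹`. Conjugation by `S` shifts a diagonal matrix cyclically
(`diagonal_mul_cycP`), so periodicity in `n` gives
`L_{t+1} R_{t+M} - R_t L_t = diag(a) + P · diag(b)`, where `a_n` and `b_n` are the defects of the
two Toda equations (`LR_sub_RL`). Hence the Toda equations imply the matrix equation. Conversely,
comparing `y = 1` with `y = -1` kills the `P`-part of the diagonal (it is odd in `y`, and nonzero
only for `N = 1`), so `a = 0`; then `b = 0` because the entries of `P` on the shifted diagonal do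
not vanish. -/

open Matrix Finset Filter

/-- The matrix `L_t(y)`: `(n,n)`-entry `1`, `(n+1,n)`-entry `V_n^t` for `n = 1,…,N-1`,
`(1,N)`-entry `V_N^t / y` (indices written 1-based; here realized 0-based on `Fin N`). -/
noncomputable def Ltoda (N : ℕ) (V : ℤ → ℤ → ℂ) (t : ℤ) (y : ℂ) :
    Matrix (Fin N) (Fin N) ℂ := fun i j =>
  (if i = j then 1 else 0) +
  (if (i : ℕ) = (j : ℕ) + 1 then V ((j : ℕ) + 1) t else 0) +
  (if (i : ℕ) = 0 ∧ (j : ℕ) = N - 1 then V N t / y else 0)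

/-- The matrix `R_t(y)`: `(n,n)`-entry `I_n^t`, `(n,n+1)`-entry `1` for `n = 1,…,N-1`,
`(N,1)`-entry `y`. -/
noncomputable def Rtoda (N : ℕ) (I : ℤ → ℤ → ℂ) (t : ℤ) (y : ℂ) :
    Matrix (Fin N) (Fin N) ℂ := fun i j =>
  (if i = j then I ((i : ℕ) + 1) t else 0) +
  (if (j : ℕ) = (i : ℕ) + 1 then 1 else 0) +
  (if (i : ℕ) = N - 1 ∧ (j : ℕ) = 0 then y else 0)

/-- The shift matrix `S(y)`: `(n,n+1)`-entry `1` for `n = 1,…,N-1`, `(N,1)`-entry `y`. -/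
def Stoda (N : ℕ) (y : ℂ) : Matrix (Fin N) (Fin N) ℂ := fun i j =>
  (if (j : ℕ) = (i : ℕ) + 1 then 1 else 0) +
  (if (i : ℕ) = N - 1 ∧ (j : ℕ) = 0 then y else 0)

/-- `Rprod N I t y k = R_{t+k-1}(y) ⋯ R_{t+1}(y) · R_t(y)`. -/
noncomputable def Rprod (N : ℕ) (I : ℤ → ℤ → ℂ) (t : ℤ) (y : ℂ) :
    ℕ → Matrix (Fin N) (Fin N) ℂ
  | 0 => 1
  | k + 1 => Rtoda N I (t + k) y * Rprod N I t y k

/-- `X_t(y) = L_t(y) · R_{t+M-1}(y) ⋯ R_{t+1}(y) · R_t(y)`. -/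
noncomputable def Xtoda (N M : ℕ) (I V : ℤ → ℤ → ℂ) (t : ℤ) (y : ℂ) :
    Matrix (Fin N) (Fin N) ℂ :=
  Ltoda N V t y * Rprod N I t y M

/-- `(I, V)` is a solution of the hungry periodic discrete Toda equation `Toda_{N,M}`. -/
def IsToda (N M : ℕ) (I V : ℤ → ℤ → ℂ) : Prop :=
  ∀ n t : ℤ,
    I n (t + M) = I n t + V n t - V (n - 1) (t + 1) ∧
    V n (t + 1) * I n (t + M) = I (n + 1) t * V n t ∧
    I (n + N) t = I n t ∧ V (n + N) t = V n t

/-- The nonzero entry of row `i` of the weighted cyclic shift: `y` in the last row, else `1`. -/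
noncomputable def cycW (m : ℕ) (y : ℂ) (i : Fin (m + 1)) : ℂ := if (i : ℕ) = m then y else 1

/-- The weighted cyclic shift `S(y)` of size `m + 1`; `i + 1` is addition modulo `m + 1`. -/
noncomputable def cycS (m : ℕ) (y : ℂ) : Matrix (Fin (m + 1)) (Fin (m + 1)) ℂ :=
  fun i j => if j = i + 1 then cycW m y i else 0

/-- The inverse of the weighted cyclic shift, for `y ≠ 0`. -/
noncomputable def cycP (m : ℕ) (y : ℂ) : Matrix (Fin (m + 1)) (Fin (m + 1)) ℂ :=
  fun i j => if i = j + 1 then (cycW m y j)⁻¹ else 0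

lemma cycW_ne_zero (m : ℕ) {y : ℂ} (hy : y ≠ 0) (i : Fin (m + 1)) : cycW m y i ≠ 0 := by
  unfold cycW; split_ifs <;> simp [hy]

lemma cycS_mul_cycP (m : ℕ) {y : ℂ} (hy : y ≠ 0) : cycS m y * cycP m y = 1 := by
  ext i j
  simp only [Matrix.mul_apply, cycS, cycP, ite_mul, zero_mul, Finset.sum_ite_eq',
    Finset.mem_univ, if_true, add_left_inj, Matrix.one_apply]
  by_cases h : i = j
  · subst h; simp [cycW_ne_zero m hy i]
  · simp [h]

lemma cycP_mul_cycS (m : ℕ) {y : ℂ} (hy : y ≠ 0) : cycP m y * cycS m y = 1 :=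
  mul_eq_one_comm.mp (cycS_mul_cycP m hy)

lemma diagonal_mul_cycP (m : ℕ) (y : ℂ) (d : Fin (m + 1) → ℂ) :
    Matrix.diagonal d * cycP m y = cycP m y * Matrix.diagonal (fun i => d (i + 1)) := by
  ext i j
  rw [Matrix.diagonal_mul, Matrix.mul_diagonal]
  by_cases h : i = j + 1
  · subst h; ring
  · simp [cycP, h]

/-- Equality with the cyclic successor, in terms of natural-number values. -/
lemma eq_cyc_succ_iff (m : ℕ) (i j : Fin (m + 1)) :
    j = i + 1 ↔ ((j : ℕ) = i + 1 ∨ ((i : ℕ) = m ∧ (j : ℕ) = 0)) := by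
  rw [Fin.ext_iff, Fin.val_add_one]
  have hi := i.isLt
  have hj := j.isLt
  split_ifs with h
  · have : (i : ℕ) = m := by simp [h]
    omega
  · have : (i : ℕ) ≠ m := fun h' => h (Fin.ext (by simpa using h'))
    omega

lemma Ltoda_eq (m : ℕ) (V : ℤ → ℤ → ℂ) (t : ℤ) (y : ℂ) :
    Ltoda (m + 1) V t y =
      1 + cycP m y * Matrix.diagonal (fun i : Fin (m + 1) => V ((i : ℕ) + 1) t) := by
  ext i j
  rw [Matrix.add_apply, Matrix.mul_diagonal, Matrix.one_apply]
  simp only [Ltoda, cycP, cycW, eq_cyc_succ_iff, add_assoc]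
  congr 1
  have hi := i.isLt
  by_cases h1 : (i : ℕ) = j + 1
  · have h2 : (j : ℕ) ≠ m := by omega
    simp [h1, h2]
  · by_cases h2 : (i : ℕ) = 0 ∧ (j : ℕ) = m
    · simp [h2.1, h2.2, div_eq_inv_mul]
    · have h3 : ¬ ((j : ℕ) = m ∧ (i : ℕ) = 0) := fun h => h2 h.symm
      simp only [Nat.add_sub_cancel, h1, h2, h3, or_self, if_false, zero_mul, add_zero]

lemma Rtoda_eq (m : ℕ) (I : ℤ → ℤ → ℂ) (t : ℤ) (y : ℂ) :
    Rtoda (m + 1) I t y =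
      Matrix.diagonal (fun i : Fin (m + 1) => I ((i : ℕ) + 1) t) + cycS m y := by
  ext i j
  rw [Matrix.add_apply, Matrix.diagonal_apply]
  simp only [Rtoda, cycS, cycW, eq_cyc_succ_iff, add_assoc]
  congr 1
  have hj := j.isLt
  by_cases h1 : (j : ℕ) = i + 1
  · have h2 : (i : ℕ) ≠ m := by omega
    simp [h1, h2]
  · by_cases h2 : (i : ℕ) = m ∧ (j : ℕ) = 0
    · simp [h2.1, h2.2]
    · simp only [Nat.add_sub_cancel, h1, h2, or_self, if_false, add_zero]

/-- A function of period `m + 1` does not see the reduction modulo `m + 1` in `i + 1`. -/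
lemma periodic_cyc_succ (m : ℕ) (g : ℤ → ℂ) (hg : ∀ n : ℤ, g (n + (m + 1 : ℕ)) = g n)
    (c : ℤ) (i : Fin (m + 1)) : g (((i + 1 : Fin (m + 1)) : ℕ) + c) = g ((i : ℕ) + 1 + c) := by
  rcases (eq_cyc_succ_iff m i (i + 1)).mp rfl with h | ⟨h1, h2⟩
  · rw [h]; push_cast; rfl
  · rw [h2, h1, ← hg]; congr 1; push_cast; ring

/-- The defect of the matrix equation, split into its diagonal and its shifted-diagonal part. -/
lemma LR_sub_RL (m M : ℕ) (I V : ℤ → ℤ → ℂ)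
    (hIper : ∀ n t : ℤ, I (n + (m + 1 : ℕ)) t = I n t)
    (hVper : ∀ n t : ℤ, V (n + (m + 1 : ℕ)) t = V n t) (t : ℤ) {y : ℂ} (hy : y ≠ 0) :
    Ltoda (m + 1) V (t + 1) y * Rtoda (m + 1) I (t + M) y
        - Rtoda (m + 1) I t y * Ltoda (m + 1) V t y =
      Matrix.diagonal (fun i : Fin (m + 1) => I ((i : ℕ) + 1) (t + M) + V (i : ℕ) (t + 1)
        - I ((i : ℕ) + 1) t - V ((i : ℕ) + 1) t) +
      cycP m y * Matrix.diagonal (fun i : Fin (m + 1) =>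
        V ((i : ℕ) + 1) (t + 1) * I ((i : ℕ) + 1) (t + M)
          - I ((i : ℕ) + 1 + 1) t * V ((i : ℕ) + 1) t) := by
  have hV := diagonal_mul_cycP m y (fun i : Fin (m + 1) => V (i : ℕ) (t + 1))
  have hI := diagonal_mul_cycP m y (fun i : Fin (m + 1) => I ((i : ℕ) + 1) t)
  have e1 : ∀ i : Fin (m + 1), V ((i + 1 : Fin (m + 1)) : ℕ) (t + 1) = V ((i : ℕ) + 1) (t + 1) :=
    fun i => by
      simpa using periodic_cyc_succ m (fun n => V n (t + 1)) (fun n => hVper n _) 0 i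
  have e2 : ∀ i : Fin (m + 1), I (((i + 1 : Fin (m + 1)) : ℕ) + 1) t = I ((i : ℕ) + 1 + 1) t :=
    fun i => periodic_cyc_succ m (fun n => I n t) (fun n => hIper n _) 1 i
  simp only [e1] at hV
  simp only [e2] at hI
  rw [Ltoda_eq, Ltoda_eq, Rtoda_eq, Rtoda_eq]
  simp only [← Matrix.diagonal_sub, ← Matrix.diagonal_add, ← Matrix.diagonal_mul_diagonal,
    Matrix.mul_sub, add_mul, mul_add, one_mul, mul_one]
  rw [← hV, ← Matrix.mul_assoc (Matrix.diagonal _) (cycP m y), hI,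
    ← Matrix.mul_assoc (cycS m y), cycS_mul_cycP m hy, Matrix.mul_assoc _ (cycP m y) (cycS m y),
    cycP_mul_cycS m hy, ← Matrix.mul_assoc (cycP m y), ← Matrix.mul_assoc (cycP m y), ← hV]
  simp only [Matrix.one_mul, Matrix.mul_one]
  abel

/-- The equation `diag(a) + P(y) · diag(b) = 0` at `y = 1` and `y = -1` forces `a = b = 0`. -/
lemma coeffs_eq_zero (m : ℕ) (a b : Fin (m + 1) → ℂ)
    (h : ∀ y : ℂ, y ≠ 0 → Matrix.diagonal a + cycP m y * Matrix.diagonal b = 0)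
    (i : Fin (m + 1)) : a i = 0 ∧ b i = 0 := by
  have key : ∀ (y : ℂ), y ≠ 0 → ∀ j k, Matrix.diagonal a j k + cycP m y j k * b k = 0 := by
    intro y hy j k
    have := congrFun (congrFun (h y hy) j) k
    rwa [Matrix.add_apply, Matrix.mul_diagonal] at this
  have ha : ∀ j, a j = 0 := by
    intro j
    have h1 := key 1 one_ne_zero j j
    have h2 := key (-1) (by norm_num) j j
    rw [Matrix.diagonal_apply_eq] at h1 h2
    by_cases hj : j = j + 1
    · -- A fixed point of the cyclic successor forces `N = 1`, where `P(y) = (1 / y)`.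
      have hw : (j : ℕ) = m := by
        rcases (eq_cyc_succ_iff m j j).mp hj with h | h <;> omega
      simp only [cycP, if_pos hj, cycW, hw, if_true] at h1 h2
      norm_num at h1 h2
      linear_combination (h1 + h2) / 2
    · simpa [cycP, hj] using h1
  refine ⟨ha i, ?_⟩
  have h1 := key 1 one_ne_zero (i + 1) i
  have hz : Matrix.diagonal a = 0 := by
    rw [show a = 0 from funext ha]; exact Matrix.diagonal_zero
  rw [hz] at h1
  simpa [cycP, cycW_ne_zero m one_ne_zero i] using h1

/-- the hpdToda equations are equivalent to the matrix equation
`L_{t+1}(y) R_{t+M}(y) = R_t(y) L_t(y)` for all `t` and all nonzero `y`. -/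
theorem stmt0 (N M : ℕ) (hN : 0 < N) (hM : 0 < M) (I V : ℤ → ℤ → ℂ)
    (hIper : ∀ n t : ℤ, I (n + N) t = I n t) (hVper : ∀ n t : ℤ, V (n + N) t = V n t) :
    (∀ n t : ℤ,
        I n (t + M) = I n t + V n t - V (n - 1) (t + 1) ∧
        V n (t + 1) * I n (t + M) = I (n + 1) t * V n t) ↔
    (∀ (t : ℤ) (y : ℂ), y ≠ 0 →
        Ltoda N V (t + 1) y * Rtoda N I (t + M) y = Rtoda N I t y * Ltoda N V t y) := by
  obtain ⟨m, rfl⟩ : ∃ m, N = m + 1 := ⟨N - 1, by omega⟩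
  constructor
  · intro h t y hy
    rw [← sub_eq_zero, LR_sub_RL m M I V hIper hVper t hy]
    have h1 : ∀ i : Fin (m + 1), I ((i : ℕ) + 1) (t + M) + V (i : ℕ) (t + 1)
        - I ((i : ℕ) + 1) t - V ((i : ℕ) + 1) t = 0 := by
      intro i
      have := (h ((i : ℕ) + 1) t).1
      rw [add_sub_cancel_right] at this
      linear_combination this
    have h2 : ∀ i : Fin (m + 1), V ((i : ℕ) + 1) (t + 1) * I ((i : ℕ) + 1) (t + M)
          - I ((i : ℕ) + 1 + 1) t * V ((i : ℕ) + 1) t = 0 :=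
      fun i => sub_eq_zero.mpr (h ((i : ℕ) + 1) t).2
    simp only [h1, h2, Matrix.diagonal_zero, Matrix.mul_zero, add_zero]
  · intro h n t
    -- Reduce `n` modulo the period to an index `i + 1` with `i : Fin (m + 1)`.
    obtain ⟨i, q, rfl⟩ : ∃ (i : Fin (m + 1)) (q : ℤ), n = (i : ℕ) + 1 + q * (m + 1 : ℕ) := by
      have hp : (0 : ℤ) < (m + 1 : ℕ) := by positivity
      have h0 := Int.emod_nonneg (n - 1) hp.ne'
      have h1 := Int.emod_lt_of_pos (n - 1) hp
      refine ⟨⟨((n - 1) % (m + 1 : ℕ)).toNat, by omega⟩, (n - 1) / (m + 1 : ℕ), ?_⟩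
      have h2 := Int.emod_add_mul_ediv (n - 1) (m + 1 : ℕ)
      simp only [Int.toNat_of_nonneg h0]
      linear_combination -h2
    have hI : ∀ k s, I (k + q * (m + 1 : ℕ)) s = I k s := fun k s =>
      (show Function.Periodic (fun n => I n s) ((m + 1 : ℕ) : ℤ) from
        fun n => hIper n s).int_mul q k
    have hV : ∀ k s, V (k + q * (m + 1 : ℕ)) s = V k s := fun k s =>
      (show Function.Periodic (fun n => V n s) ((m + 1 : ℕ) : ℤ) from
        fun n => hVper n s).int_mul q k
    obtain ⟨ha, hb⟩ := coeffs_eq_zero m _ _ (fun y hy =>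
      (LR_sub_RL m M I V hIper hVper t hy).symm.trans (sub_eq_zero.mpr (h t y hy))) i
    rw [show ((i : ℕ) : ℤ) + 1 + q * (m + 1 : ℕ) - 1 = (i : ℕ) + q * (m + 1 : ℕ) by ring,
      show ((i : ℕ) : ℤ) + 1 + q * (m + 1 : ℕ) + 1 = (i : ℕ) + 1 + 1 + q * (m + 1 : ℕ) by ring]
    simp only [hI, hV]
    exact ⟨by linear_combination ha, by linear_combination hb⟩
end

section
/- Let N, M be positive integers and let I_n^t, V_n^t (n, t ∈ ℤ) be arbitrary complex numbers, N-periodic in n. Then for every t ∈ ℤ and every nonzero y ∈ ℂ, det X_t(y) = (1 + (−1)^{N+1}·y^{−1}·∏_{n=1}^N V_n^t) · ∏_{j=0}^{M−1} (∏_{n=1}^N I_n^{t+j} + (−1)^{N+1}·y). -/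
/-!
`L_t(y)ᵀ` and every `R_s(y)` are periodic bidiagonal matrices: a diagonal, a superdiagonal and one
entry in the lower left corner. Expanding the determinant of such a matrix along its first column
leaves two triangular minors (`det_periodicBidiag`), whose contributions are the product of the
diagonal and, up to sign, the product of the superdiagonal with the corner. The formula for
`det X_t(y)` follows by multiplicativity of the determinant.
-/

open Matrix Finset Filter

/-- The matrix with diagonal `a`, superdiagonal `b` and an additional summand `c` in the lower left
corner (for size one, the corner is on the diagonal). -/
def periodicBidiag (n : ℕ) (a b : ℕ → ℂ) (c : ℂ) : Matrix (Fin (n + 1)) (Fin (n + 1)) ℂ :=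
  fun i j =>
    (if i = j then a i else 0) + (if (j : ℕ) = (i : ℕ) + 1 then b i else 0) +
      (if (i : ℕ) = n ∧ (j : ℕ) = 0 then c else 0)

lemma det_periodicBidiag (n : ℕ) (a b : ℕ → ℂ) (c : ℂ) :
    (periodicBidiag n a b c).det =
      ∏ i ∈ Finset.range (n + 1), a i + (-1) ^ n * c * ∏ i ∈ Finset.range n, b i := by
  have hcol : ∀ i : Fin (n + 1), periodicBidiag n a b c i 0 =
      (if i = 0 then a 0 else 0) + (if i = Fin.last n then c else 0) := by
    intro i
    simp only [periodicBidiag, Fin.ext_iff, Fin.val_zero, Fin.val_last]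
    by_cases h : (i : ℕ) = 0 <;> simp [h]
  have hzero : ((periodicBidiag n a b c).submatrix (Fin.succAbove 0) Fin.succ).det =
      ∏ i ∈ Finset.range n, a (i + 1) := by
    rw [Matrix.det_of_isUpperTriangular, ← Fin.prod_univ_eq_prod_range (fun i => a (i + 1))]
    · simp [periodicBidiag]
    · intro i j hij
      have hij' : (j : ℕ) < i := hij
      have h1 : i ≠ j := by rintro rfl; omega
      have h2 : ¬ (j : ℕ) = (i : ℕ) + 1 := by omega
      simp [periodicBidiag, h1, h2]
  have hlast : ((periodicBidiag n a b c).submatrix (Fin.succAbove (Fin.last n)) Fin.succ).det =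
      ∏ i ∈ Finset.range n, b i := by
    rw [Matrix.det_of_isLowerTriangular, ← Fin.prod_univ_eq_prod_range b]
    · simp [periodicBidiag, Fin.ext_iff]
    · intro i j hij
      have hij' : (i : ℕ) < j := hij
      have h1 : ¬ (i : ℕ) = (j : ℕ) + 1 := by omega
      have h2 : ¬ (j : ℕ) = (i : ℕ) := by omega
      simp [periodicBidiag, Fin.ext_iff, h1, h2]
  rw [Matrix.det_succ_column_zero]
  simp only [hcol, mul_add, add_mul, Finset.sum_add_distrib, mul_ite, ite_mul, mul_zero, zero_mul,
    Finset.sum_ite_eq', Finset.mem_univ, if_true, hzero, hlast, Fin.val_zero, Fin.val_last]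
  rw [Finset.prod_range_succ' a]
  ring

lemma det_Rtoda (n : ℕ) (I : ℤ → ℤ → ℂ) (t : ℤ) (y : ℂ) :
    (Rtoda (n + 1) I t y).det =
      (∏ k ∈ Finset.range (n + 1), I ((k : ℤ) + 1) t) + (-1 : ℂ) ^ (n + 1 + 1) * y := by
  have h : Rtoda (n + 1) I t y = periodicBidiag n (fun k => I ((k : ℤ) + 1) t) (fun _ => 1) y := by
    ext i j
    simp [Rtoda, periodicBidiag]
  rw [h, det_periodicBidiag]
  simp only [Finset.prod_const_one]
  ring

lemma det_Ltoda (n : ℕ) (V : ℤ → ℤ → ℂ) (t : ℤ) (y : ℂ) :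
    (Ltoda (n + 1) V t y).det =
      1 + (-1 : ℂ) ^ (n + 1 + 1) * y⁻¹ * ∏ k ∈ Finset.range (n + 1), V ((k : ℤ) + 1) t := by
  have h : (Ltoda (n + 1) V t y)ᵀ =
      periodicBidiag n (fun _ => 1) (fun k => V ((k : ℤ) + 1) t) (V ((n : ℤ) + 1) t / y) := by
    ext i j
    simp [Ltoda, periodicBidiag, eq_comm, and_comm]
  rw [← Matrix.det_transpose, h, det_periodicBidiag,
    Finset.prod_range_succ (fun k : ℕ => V ((k : ℤ) + 1) t)]
  simp only [Finset.prod_const_one]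
  ring

lemma det_Rprod (n : ℕ) (I : ℤ → ℤ → ℂ) (t : ℤ) (y : ℂ) (M : ℕ) :
    (Rprod (n + 1) I t y M).det = ∏ j ∈ Finset.range M,
      ((∏ k ∈ Finset.range (n + 1), I ((k : ℤ) + 1) (t + j)) + (-1 : ℂ) ^ (n + 1 + 1) * y) := by
  induction M with
  | zero => simp [Rprod]
  | succ M ih => rw [Rprod, Matrix.det_mul, ih, det_Rtoda, Finset.prod_range_succ _ M, mul_comm]

/-- the explicit formula for `det X_t(y)`. -/
theorem stmt4 (N M : ℕ) (hN : 0 < N) (hM : 0 < M) (I V : ℤ → ℤ → ℂ)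
    (hIper : ∀ n t : ℤ, I (n + N) t = I n t) (hVper : ∀ n t : ℤ, V (n + N) t = V n t) :
    ∀ (t : ℤ) (y : ℂ), y ≠ 0 →
      (Xtoda N M I V t y).det =
        (1 + (-1 : ℂ) ^ (N + 1) * y⁻¹ * ∏ n ∈ Finset.range N, V ((n : ℤ) + 1) t) *
          ∏ j ∈ Finset.range M,
            ((∏ n ∈ Finset.range N, I ((n : ℤ) + 1) (t + j)) + (-1 : ℂ) ^ (N + 1) * y) := by
  intro t y _
  obtain ⟨n, rfl⟩ : ∃ n, N = n + 1 := ⟨N - 1, by omega⟩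
  rw [Xtoda, Matrix.det_mul, det_Ltoda, det_Rprod]
end

section
/- Let I_n^t, V_n^t be a solution of the hpdToda equation, let y ∈ ℂ be nonzero, let x ∈ ℂ, and let v ∈ ℂ^N. Then: (i) if X_t(y)·v = x·v, then X_{t+1}(y)·(R_t(y)·v) = x·(R_t(y)·v); (ii) if X_{t+M}(y)·v = x·v, then X_t(y)·(L_t(y)·v) = x·(L_t(y)·v). In other words, R_t(y) and L_t(y) transport eigenvectors of X_t(y) under the time evolutions t ↦ t+1 and t+M ↦ t respectively. -/
/-!
The two evolution equations say exactly that `L_{t+1}(y) R_{t+M}(y) = R_t(y) L_t(y)`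
(`lax_step`): the first is the equality of the diagonal entries and the second that of the
subdiagonal entries, periodicity taking care of the corners. Hence
`X_{t+1} R_t = L_{t+1} R_{t+M} R_{t+M-1} ⋯ R_t = R_t L_t R_{t+M-1} ⋯ R_t = R_t X_t`.
Moving `L_t` to the left through all `M` factors of `X_t L_t` (`Rprod_mul_Ltoda`) gives
`X_t L_t = L_t X_{t+M}`. Both claims follow by applying these identities to an eigenvector.
-/

open Matrix Finset Filter

/-- Action of `L_t(y)` on a vector; row `0` wraps around with the factor `1 / y`. -/
lemma Ltoda_mulVec (m : ℕ) (V : ℤ → ℤ → ℂ) (t : ℤ) (y : ℂ) (w : Fin (m + 1) → ℂ)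
    (i : Fin (m + 1)) :
    (Ltoda (m + 1) V t y).mulVec w i = w i +
      if (i : ℕ) = 0 then V (m + 1) t / y * w (Fin.last m)
      else V (i : ℕ) t * w ⟨(i : ℕ) - 1, by omega⟩ := by
  simp only [Matrix.mulVec, dotProduct, Ltoda, add_mul, Finset.sum_add_distrib, add_assoc]
  congr 1
  · simp
  · split_ifs with h
    · rw [Finset.sum_eq_zero (by intro j _; rw [if_neg (by omega), zero_mul]), zero_add,
        Finset.sum_eq_single (Fin.last m)]
      · simp [h]
      · intro j _ hj
        have : (j : ℕ) ≠ m := fun h' => hj (Fin.ext h')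
        rw [if_neg (by omega), zero_mul]
      · simp
    · rw [add_comm, Finset.sum_eq_zero (by intro j _; rw [if_neg (by omega), zero_mul]),
        zero_add, Finset.sum_eq_single ⟨(i : ℕ) - 1, by omega⟩]
      · have e : (((i : ℕ) - 1 : ℕ) : ℤ) + 1 = (i : ℕ) := by omega
        rw [if_pos (by simp only; omega)]
        simp only [e]
      · intro j _ hj
        have : (j : ℕ) ≠ (i : ℕ) - 1 := fun h' => hj (Fin.ext h')
        rw [if_neg (by omega), zero_mul]
      · simp

/-- Action of `R_t(y)` on a vector; the last row wraps around with the factor `y`. -/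
lemma Rtoda_mulVec (m : ℕ) (I : ℤ → ℤ → ℂ) (t : ℤ) (y : ℂ) (w : Fin (m + 1) → ℂ)
    (i : Fin (m + 1)) :
    (Rtoda (m + 1) I t y).mulVec w i = I ((i : ℕ) + 1) t * w i +
      if h : (i : ℕ) = m then y * w 0 else w ⟨(i : ℕ) + 1, by omega⟩ := by
  simp only [Matrix.mulVec, dotProduct, Rtoda, add_mul, Finset.sum_add_distrib, add_assoc]
  congr 1
  · simp
  · split_ifs with h
    · rw [Finset.sum_eq_zero (by intro j _; rw [if_neg (by omega), zero_mul]), zero_add,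
        Finset.sum_eq_single 0]
      · simp [h]
      · intro j _ hj
        have : (j : ℕ) ≠ 0 := fun h' => hj (Fin.ext h')
        rw [if_neg (by omega), zero_mul]
      · simp
    · rw [add_comm, Finset.sum_eq_zero (by intro j _; rw [if_neg (by omega), zero_mul]),
        zero_add, Finset.sum_eq_single ⟨(i : ℕ) + 1, by omega⟩]
      · simp
      · intro j _ hj
        have : (j : ℕ) ≠ (i : ℕ) + 1 := fun h' => hj (Fin.ext h')
        rw [if_neg (by omega), zero_mul]
      · simp

/-- The matrix form of the hpdToda equation. -/
lemma lax_step (N M : ℕ) (hN : 0 < N) (I V : ℤ → ℤ → ℂ) (hsol : IsToda N M I V) (t : ℤ)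
    (y : ℂ) (hy : y ≠ 0) :
    Ltoda N V (t + 1) y * Rtoda N I (t + M) y = Rtoda N I t y * Ltoda N V t y := by
  obtain ⟨m, rfl⟩ : ∃ m, N = m + 1 := ⟨N - 1, by omega⟩
  refine Matrix.ext_of_mulVec_single fun k => ?_
  generalize (Pi.single k 1 : Fin (m + 1) → ℂ) = w
  rw [← Matrix.mulVec_mulVec, ← Matrix.mulVec_mulVec]
  funext i
  obtain ⟨i, hi⟩ := i
  obtain ⟨h1, -, -, -⟩ := hsol (i + 1) t
  obtain ⟨-, h2, -, -⟩ := hsol i t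
  rw [add_sub_cancel_right] at h1
  simp only [Ltoda_mulVec, Rtoda_mulVec]
  by_cases h0 : i = 0
  · subst h0
    -- Periodicity identifies the index `0` of the equations with the corner index `N = m + 1`.
    have pV := fun s => (hsol 0 s).2.2.2
    have pI := fun s => (hsol 0 s).2.2.1
    push_cast at h1 h2 pV pI
    simp only [zero_add] at h1 h2 pV pI
    rw [← pV, ← pI, ← pV] at h2
    rw [← pV] at h1
    by_cases hm : m = 0
    · subst hm
      simp at h1 h2 ⊢
      field_simp
      linear_combination y * w 0 * h1 + w 0 * h2
    · have hm' : ¬ 0 = m := fun h => hm h.symm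
      simp [hm'] at h1 h2 ⊢
      field_simp
      linear_combination y * w 0 * h1 + w (Fin.last m) * h2
  · have e : ((i - 1 : ℕ) : ℤ) + 1 = i := by omega
    have e' : i - 1 + 1 = i := by omega
    have e2 : ¬ i - 1 = m := by omega
    by_cases hm : i = m
    · subst hm
      have hlast : Fin.last i = ⟨i, hi⟩ := rfl
      simp [h0, e, e', e2, hlast] at h1 h2 ⊢
      field_simp
      linear_combination w ⟨i, hi⟩ * h1 + w ⟨i - 1, by omega⟩ * h2
    · simp [h0, hm, e, e', e2] at h1 h2 ⊢
      linear_combination w ⟨i, hi⟩ * h1 + w ⟨i - 1, by omega⟩ * h2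

lemma Rprod_succ_right (N : ℕ) (I : ℤ → ℤ → ℂ) (t : ℤ) (y : ℂ) (k : ℕ) :
    Rprod N I (t + 1) y k * Rtoda N I t y = Rprod N I t y (k + 1) := by
  induction k with
  | zero => simp [Rprod]
  | succ k ih =>
    have e : t + 1 + (k : ℤ) = t + ((k + 1 : ℕ) : ℤ) := by push_cast; ring
    rw [Rprod, Matrix.mul_assoc, ih, e, ← Rprod]

/-- Iterating `lax_step`, the matrix `L_t` moves to the left through `k` factors `R`, which
turns each `R_s` into `R_{s+M}`. -/
lemma Rprod_mul_Ltoda (N M : ℕ) (hN : 0 < N) (I V : ℤ → ℤ → ℂ) (hsol : IsToda N M I V)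
    (t : ℤ) (y : ℂ) (hy : y ≠ 0) (k : ℕ) :
    Rprod N I t y k * Ltoda N V t y = Ltoda N V (t + k) y * Rprod N I (t + M) y k := by
  induction k with
  | zero => simp [Rprod]
  | succ k ih =>
    have e : t + ((k + 1 : ℕ) : ℤ) = t + k + 1 := by push_cast; ring
    rw [Rprod, Rprod, Matrix.mul_assoc, ih, ← Matrix.mul_assoc,
      ← lax_step N M hN I V hsol (t + k) y hy, e, Matrix.mul_assoc, add_right_comm t (k : ℤ) (M : ℤ)]

/-- `R_t(y)` and `L_t(y)` transport eigenvectors of `X_t(y)` under the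
time evolutions `t ↦ t+1` and `t+M ↦ t` respectively. -/
theorem stmt7 (N M : ℕ) (hN : 0 < N) (hM : 0 < M) (I V : ℤ → ℤ → ℂ)
    (hsol : IsToda N M I V) (t : ℤ) (y : ℂ) (hy : y ≠ 0) (x : ℂ) (v : Fin N → ℂ) :
    ((Xtoda N M I V t y).mulVec v = x • v →
      (Xtoda N M I V (t + 1) y).mulVec ((Rtoda N I t y).mulVec v) =
        x • (Rtoda N I t y).mulVec v) ∧
    ((Xtoda N M I V (t + M) y).mulVec v = x • v →
      (Xtoda N M I V t y).mulVec ((Ltoda N V t y).mulVec v) =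
        x • (Ltoda N V t y).mulVec v) := by
  have hR : Xtoda N M I V (t + 1) y * Rtoda N I t y = Rtoda N I t y * Xtoda N M I V t y := by
    rw [Xtoda, Xtoda, Matrix.mul_assoc, Rprod_succ_right, Rprod, ← Matrix.mul_assoc,
      lax_step N M hN I V hsol t y hy, Matrix.mul_assoc]
  have hL : Xtoda N M I V t y * Ltoda N V t y = Ltoda N V t y * Xtoda N M I V (t + M) y := by
    rw [Xtoda, Xtoda, Matrix.mul_assoc, Rprod_mul_Ltoda N M hN I V hsol t y hy]
  constructor
  · intro h
    rw [Matrix.mulVec_mulVec, hR, ← Matrix.mulVec_mulVec, h, Matrix.mulVec_smul]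
  · intro h
    rw [Matrix.mulVec_mulVec, hL, ← Matrix.mulVec_mulVec, h, Matrix.mulVec_smul]
end

section
/- Let I_n^t, V_n^t be a solution of the hpdToda equation. Then the quantity H(t) := Σ_{j=0}^{M−1} Σ_{n=1}^N I_n^{t+j} + Σ_{n=1}^N V_n^t satisfies H(t+1) = H(t) for all t ∈ ℤ; equivalently, Σ_{n=1}^N I_n^{t+M} + Σ_{n=1}^N V_n^{t+1} = Σ_{n=1}^N I_n^t + Σ_{n=1}^N V_n^t for all t. -/
/-!
Summing the local law `I_n^{t+M} = I_n^t + V_n^t - V_{n-1}^{t+1}` over one period in `n`, and using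
the `N`-periodicity of `V` to replace `∑ V_{n-1}^{t+1}` by `∑ V_n^{t+1}`, gives the second
identity. The conservation of `H` follows because the double sums over `j` in `H(t+1)` and `H(t)`
telescope to the time slices `t + M` and `t`.
-/

open Matrix Finset Filter

/-- the quantity `H(t) = Σ_{j=0}^{M-1} Σ_{n=1}^N I_n^{t+j} + Σ_{n=1}^N V_n^t`
is conserved; equivalently `Σ_n I_n^{t+M} + Σ_n V_n^{t+1} = Σ_n I_n^t + Σ_n V_n^t`. -/
theorem stmt10 (N M : ℕ) (hN : 0 < N) (hM : 0 < M) (I V : ℤ → ℤ → ℂ)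
    (hsol : IsToda N M I V) :
    ∀ t : ℤ,
      ((∑ j ∈ Finset.range M, ∑ n ∈ Finset.range N, I ((n : ℤ) + 1) (t + 1 + j)) +
          ∑ n ∈ Finset.range N, V ((n : ℤ) + 1) (t + 1) =
        (∑ j ∈ Finset.range M, ∑ n ∈ Finset.range N, I ((n : ℤ) + 1) (t + j)) +
          ∑ n ∈ Finset.range N, V ((n : ℤ) + 1) t) ∧
      ((∑ n ∈ Finset.range N, I ((n : ℤ) + 1) (t + M)) +
          ∑ n ∈ Finset.range N, V ((n : ℤ) + 1) (t + 1) =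
        (∑ n ∈ Finset.range N, I ((n : ℤ) + 1) t) +
          ∑ n ∈ Finset.range N, V ((n : ℤ) + 1) t) := by
  intro t
  -- the local law (i), summed over one period in `n`
  have key : (∑ n ∈ Finset.range N, I ((n : ℤ) + 1) (t + M)) +
          ∑ n ∈ Finset.range N, V ((n : ℤ) + 1) (t + 1) =
        (∑ n ∈ Finset.range N, I ((n : ℤ) + 1) t) +
          ∑ n ∈ Finset.range N, V ((n : ℤ) + 1) t := by
    have hI : ∑ n ∈ Finset.range N, I ((n : ℤ) + 1) (t + M) =
        ∑ n ∈ Finset.range N, (I ((n : ℤ) + 1) t + V ((n : ℤ) + 1) t - V n (t + 1)) := by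
      refine Finset.sum_congr rfl fun n _ => ?_
      rw [(hsol (n + 1) t).1, add_sub_cancel_right]
    -- periodicity: the index windows `0, …, N-1` and `1, …, N` give the same sum
    have hV : ∑ n ∈ Finset.range N, V ((n : ℤ) + 1) (t + 1) =
        ∑ n ∈ Finset.range N, V n (t + 1) := by
      have h1 := Finset.sum_range_succ (fun n : ℕ => V n (t + 1)) N
      have h2 := Finset.sum_range_succ' (fun n : ℕ => V n (t + 1)) N
      have h3 := (hsol 0 (t + 1)).2.2.2
      push_cast at h1 h2
      rw [zero_add] at h3
      linear_combination h1 - h2 + h3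
    rw [hI, hV, Finset.sum_sub_distrib, Finset.sum_add_distrib]
    ring
  refine ⟨?_, key⟩
  -- `H(t+1)` and `H(t)` differ in their `I`-part only by the time slices `t + M` and `t`
  have h1 := Finset.sum_range_succ
    (fun j : ℕ => ∑ n ∈ Finset.range N, I ((n : ℤ) + 1) (t + j)) M
  have h2 := Finset.sum_range_succ'
    (fun j : ℕ => ∑ n ∈ Finset.range N, I ((n : ℤ) + 1) (t + j)) M
  have h3 : ∀ j : ℕ, t + ((j + 1 : ℕ) : ℤ) = t + 1 + j := fun j => by push_cast; ring
  simp only [h3, Nat.cast_zero, add_zero] at h2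
  linear_combination key + h1 - h2
end

section
/- Let I_n^t, V_n^t be a solution of the hpdToda equation. Then for all t ∈ ℤ, (∏_{n=1}^N I_n^{t+M})·(∏_{n=1}^N V_n^{t+1}) = (∏_{n=1}^N I_n^t)·(∏_{n=1}^N V_n^t). -/
/-!
Multiplying the relations `V_n^{t+1} I_n^{t+M} = I_{n+1}^t V_n^t` over one period gives the claim,
since the product of `I_{n+1}^t` over a period equals that of `I_n^t`.
-/

open Matrix Finset Filter

/-- `(∏_n I_n^{t+M})·(∏_n V_n^{t+1}) = (∏_n I_n^t)·(∏_n V_n^t)`. -/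
theorem stmt11 (N M : ℕ) (hN : 0 < N) (hM : 0 < M) (I V : ℤ → ℤ → ℂ)
    (hsol : IsToda N M I V) :
    ∀ t : ℤ,
      (∏ n ∈ Finset.range N, I ((n : ℤ) + 1) (t + M)) *
          ∏ n ∈ Finset.range N, V ((n : ℤ) + 1) (t + 1) =
        (∏ n ∈ Finset.range N, I ((n : ℤ) + 1) t) *
          ∏ n ∈ Finset.range N, V ((n : ℤ) + 1) t := by
  intro t
  have hstep : ∀ n ∈ Finset.range N,
      I ((n : ℤ) + 1) (t + M) * V ((n : ℤ) + 1) (t + 1) =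
        I (((n + 1 : ℕ) : ℤ) + 1) t * V ((n : ℤ) + 1) t := by
    intro n _
    have h := (hsol ((n : ℤ) + 1) t).2.1
    push_cast
    rw [mul_comm, h]
  -- Shifting the index by one permutes the factors cyclically, by periodicity `I_{N+1} = I_1`.
  have hshift : ∏ n ∈ Finset.range N, I (((n + 1 : ℕ) : ℤ) + 1) t =
      ∏ n ∈ Finset.range N, I ((n : ℤ) + 1) t := by
    obtain ⟨k, rfl⟩ : ∃ k, N = k + 1 := ⟨N - 1, by omega⟩
    have h := (hsol 1 t).2.2.1
    rw [Finset.prod_range_succ, Finset.prod_range_succ' (fun n : ℕ => I ((n : ℤ) + 1) t),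
      add_comm (((k + 1 : ℕ) : ℤ)) 1, h]
    simp
  rw [← Finset.prod_mul_distrib, Finset.prod_congr rfl hstep, Finset.prod_mul_distrib, hshift]
end

section
/- Let I_n^t, V_n^t be a solution of the hpdToda equation with N = 2 and M = 2 (the system Toda_{2,2}). Then the quantity U_5(t) := I_1^t + I_2^t + I_1^{t+1} + I_2^{t+1} + V_1^t + V_2^t is independent of t: U_5(t+1) = U_5(t) for all t ∈ ℤ. (This is the extra conserved quantity of Toda_{2,2}.) -/
open Matrix Finset Filter

/-- the extra conserved quantity `U₅ = I_1^t + I_2^t + I_1^{t+1} + I_2^{t+1}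
+ V_1^t + V_2^t` of `Toda_{2,2}`. -/
theorem stmt12 (I V : ℤ → ℤ → ℂ) (hsol : IsToda 2 2 I V) :
    ∀ t : ℤ,
      I 1 (t + 1) + I 2 (t + 1) + I 1 (t + 1 + 1) + I 2 (t + 1 + 1) +
          V 1 (t + 1) + V 2 (t + 1) =
        I 1 t + I 2 t + I 1 (t + 1) + I 2 (t + 1) + V 1 t + V 2 t := by
  intro t
  obtain ⟨h1, -, -, -⟩ := hsol 1 t
  obtain ⟨h2, -, -, -⟩ := hsol 2 t
  -- Periodicity identifies the site `0` with the site `2`.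
  obtain ⟨-, -, -, hV⟩ := hsol 0 (t + 1)
  norm_num at h1 h2 hV
  rw [show t + 1 + 1 = t + 2 by ring, h1, h2, hV]
  ring
end

section
/- Let I_1^t, I_2^t, I_1^{t+1}, I_2^{t+1}, V_1^t, V_2^t be arbitrary complex numbers and let y be a nonzero complex number. With N = M = 2, let X_t(y) := L_t(y)·R_{t+1}(y)·R_t(y), where L_t(y) = [[1, V_2^t/y],[V_1^t, 1]] and R_s(y) = [[I_1^s, 1],[y, I_2^s]]. Then for all x ∈ ℂ, det(X_t(y) − x·E) = y² − y(2x + U_1) + x² − U_2·x + U_3 − U_4·y^{−1}, where U_1 = I_1^tI_2^t + I_1^{t+1}I_2^{t+1} + V_1^tV_2^t, U_2 = I_1^tI_1^{t+1} + I_2^tI_2^{t+1} + I_1^tV_2^t + I_1^{t+1}V_1^t + I_2^tV_1^t + I_2^{t+1}V_2^t, U_3 = I_1^tI_2^tI_1^{t+1}I_2^{t+1} + I_1^{t+1}I_2^{t+1}V_1^tV_2^t + V_1^tV_2^tI_1^tI_2^t, and U_4 = I_1^tI_2^tI_1^{t+1}I_2^{t+1}V_1^tV_2^t. -/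
open Matrix

/-- the characteristic polynomial of `X_t(y) = L_t(y)·R_{t+1}(y)·R_t(y)`
for `N = M = 2`:
`det(X_t(y) − xE) = y² − y(2x + U₁) + x² − U₂x + U₃ − U₄y⁻¹`. -/
theorem stmt13 (I1t I2t I1t1 I2t1 V1t V2t : ℂ) (y : ℂ) (hy : y ≠ 0) (x : ℂ) :
    ((!![(1 : ℂ), V2t / y; V1t, 1] * !![I1t1, 1; y, I2t1] * !![I1t, 1; y, I2t]) -
        x • (1 : Matrix (Fin 2) (Fin 2) ℂ)).det =
      y ^ 2 - y * (2 * x + (I1t * I2t + I1t1 * I2t1 + V1t * V2t)) + x ^ 2 -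
        (I1t * I1t1 + I2t * I2t1 + I1t * V2t + I1t1 * V1t + I2t * V1t + I2t1 * V2t) * x +
        (I1t * I2t * I1t1 * I2t1 + I1t1 * I2t1 * V1t * V2t + V1t * V2t * I1t * I2t) -
        (I1t * I2t * I1t1 * I2t1 * V1t * V2t) * y⁻¹ := by
  simp [Matrix.det_fin_two]
  field_simp
  ring
end

section
/- Let I_1^0, I_2^0, I_1^1, I_2^1, V_1^0, V_2^0, ζ be complex numbers and y a nonzero complex number. Define 2×2 matrices L_0 = [[1, V_2^0/y],[V_1^0, 1]], R_0 = [[ζ, 1],[y, ζ]], R_1 = [[I_1^0, 1],[y, I_2^0]], R_2 = [[I_1^1, 1],[y, I_2^1]], and X_0 := L_0·R_2·R_1·R_0. Then for all x ∈ ℂ, det(X_0 − x·E) = −y³ + y²(ζ² + U_1) − y{(2ζ + U_5)x + U_1ζ² + U_3} + x² − (U_2ζ + U_6)x + U_3ζ² + U_4 − U_4ζ²·y^{−1}, where U_1 = I_1^0I_2^0 + I_1^1I_2^1 + V_1^0V_2^0, U_2 = I_1^0I_1^1 + I_2^0I_2^1 + I_1^0V_2^0 + I_1^1V_1^0 + I_2^0V_1^0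 + I_2^1V_2^0, U_3 = I_1^0I_2^0I_1^1I_2^1 + I_1^1I_2^1V_1^0V_2^0 + V_1^0V_2^0I_1^0I_2^0, U_4 = I_1^0I_2^0I_1^1I_2^1V_1^0V_2^0, U_5 = I_1^0 + I_2^0 + I_1^1 + I_2^1 + V_1^0 + V_2^0, and U_6 = I_1^0I_1^1V_1^0 + I_2^0I_2^1V_2^0. -/
open Matrix

/-- the characteristic polynomial of `X₀ = L₀·R₂·R₁·R₀` in the example of
section 4:
`det(X₀ − xE) = −y³ + y²(ζ² + U₁) − y{(2ζ + U₅)x + U₁ζ² + U₃} + x² − (U₂ζ + U₆)x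
  + U₃ζ² + U₄ − U₄ζ²y⁻¹`. -/
theorem stmt14 (I10 I20 I11 I21 V10 V20 ζ : ℂ) (y : ℂ) (hy : y ≠ 0) (x : ℂ) :
    ((!![(1 : ℂ), V20 / y; V10, 1] * !![I11, 1; y, I21] * !![I10, 1; y, I20] *
          !![ζ, 1; y, ζ]) - x • (1 : Matrix (Fin 2) (Fin 2) ℂ)).det =
      -y ^ 3 + y ^ 2 * (ζ ^ 2 + (I10 * I20 + I11 * I21 + V10 * V20)) -
        y * ((2 * ζ + (I10 + I20 + I11 + I21 + V10 + V20)) * x +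
          (I10 * I20 + I11 * I21 + V10 * V20) * ζ ^ 2 +
          (I10 * I20 * I11 * I21 + I11 * I21 * V10 * V20 + V10 * V20 * I10 * I20)) +
        x ^ 2 -
        ((I10 * I11 + I20 * I21 + I10 * V20 + I11 * V10 + I20 * V10 + I21 * V20) * ζ +
          (I10 * I11 * V10 + I20 * I21 * V20)) * x +
        (I10 * I20 * I11 * I21 + I11 * I21 * V10 * V20 + V10 * V20 * I10 * I20) * ζ ^ 2 +
        I10 * I20 * I11 * I21 * V10 * V20 -
        I10 * I20 * I11 * I21 * V10 * V20 * ζ ^ 2 * y⁻¹ := by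
  rw [Matrix.det_fin_two]
  simp only [Matrix.mul_fin_two, Matrix.sub_apply, Matrix.smul_apply, Matrix.one_fin_two,
    Matrix.of_apply, Matrix.cons_val', Matrix.cons_val_zero, Matrix.cons_val_one,
    Matrix.cons_val_fin_one, smul_eq_mul]
  field_simp
  ring
end

section
/- Let N, M be positive integers and let I_n^t, V_n^t (n, t ∈ ℤ) be complex numbers, N-periodic in n. Then for each t ∈ ℤ there exists a polynomial G(x, Y) in two variables with complex coefficients such that: (a) for every x ∈ ℂ and every nonzero y ∈ ℂ, y·det(X_t(y) − x·E) = G(x, y); (b) the degree of G in Y is at most M+1; (c) the degree of G in x is N, and the coefficient of x^N in G(x, Y) is (−1)^N·Y. -/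
/-!
The variable `y` enters each factor `R_s(y)` through a single matrix entry, and `y⁻¹` enters
`L_t(y)` through a single entry. Let the `M` factors `R_s` depend on independent variables
`y_0, …, y_{M-1}` (`RprodVar`). In each single `y_k` the product `L · R ⋯ R` is then an affine
family `A + y_k u vᵀ` of rank-one perturbations, so every coefficient of its characteristic
polynomial is affine in `y_k` (`coeff_charpoly_add_smul`, from the Schur complement). A function that
is affine in each of `M` variables restricts to the diagonal as a polynomial of degree at most `M`
(`exists_poly_diag`). The same affineness in `y⁻¹` for `L_t(y)` shows that `y` times the `i`-th
coefficient of the characteristic polynomial of `X_t(y)` is a polynomial in `y` of degree at most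
`M + 1` (`exists_poly_coeff`). These polynomials, up to the sign `(-1)^N`, are the coefficients of
`G`; the leading one is `(-1)^N Y` because the characteristic polynomial is monic of degree `N`.
-/

open Matrix Finset Filter

/-- The determinant is affine along a rank-one direction: by the Schur complement,
`det (B + a u vᵀ)` is the determinant of a bordered matrix with `a` in its last column only. -/
lemma det_add_smul_vecMulVec {n R : Type*} [Fintype n] [DecidableEq n] [CommRing R]
    (B : Matrix n n R) (u v : n → R) (a : R) :
    (B + a • vecMulVec u v).det = (1 - a) * B.det + a * (B + vecMulVec u v).det := by
  have key : ∀ c : R, (B + c • vecMulVec u v).det =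
      ((fromBlocks B 0 (replicateRow Unit v) 1).updateCol (Sum.inr ())
        (Sum.elim (-(c • u)) 1)).det := by
    intro c
    have h : (fromBlocks B 0 (replicateRow Unit v) 1).updateCol (Sum.inr ())
        (Sum.elim (-(c • u)) 1) =
        fromBlocks B (replicateCol Unit (-(c • u))) (replicateRow Unit v) 1 := by
      ext (i | i) (j | j) <;> simp
    rw [h, det_fromBlocks_one₂₂]
    congr 1
    ext i j
    simp [vecMulVec_apply, Matrix.mul_apply, mul_assoc]
  have h0 := key 0
  have h1 := key 1
  have hcol : (Sum.elim (-(a • u)) 1 : n ⊕ Unit → R) =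
      (1 - a) • (Sum.elim (-((0 : R) • u)) 1) + a • (Sum.elim (-((1 : R) • u)) 1) := by
    ext (i | i) <;> simp
  rw [zero_smul, add_zero] at h0
  rw [one_smul R (vecMulVec u v)] at h1
  rw [key a, hcol, det_updateCol_add, det_updateCol_smul, det_updateCol_smul, ← h0, ← h1]

lemma coeff_charpoly_add_smul {n : Type*} [Fintype n] [DecidableEq n]
    (B : Matrix n n ℂ) (u v : n → ℂ) (a : ℂ) (i : ℕ) :
    (B + a • vecMulVec u v).charpoly.coeff i =
      (1 - a) * B.charpoly.coeff i + a * (B + vecMulVec u v).charpoly.coeff i := by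
  have key : ∀ c : ℂ, (B + c • vecMulVec u v).charmatrix = B.charmatrix +
      Polynomial.C c • vecMulVec (fun i => -Polynomial.C (u i)) (fun i => Polynomial.C (v i)) := by
    intro c
    ext1 i j
    simp only [charmatrix_apply, Matrix.add_apply, Matrix.smul_apply, vecMulVec_apply, smul_eq_mul,
      map_add, map_mul]
    ring
  have h1 := key 1
  rw [one_smul, map_one, one_smul] at h1
  have h : (B + a • vecMulVec u v).charpoly =
      Polynomial.C (1 - a) * B.charpoly + Polynomial.C a * (B + vecMulVec u v).charpoly := by
    simp only [Matrix.charpoly, key a, h1, det_add_smul_vecMulVec _ _ _ (Polynomial.C a),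
      map_sub, map_one]
  rw [h, Polynomial.coeff_add, Polynomial.coeff_C_mul, Polynomial.coeff_C_mul]

/-- A function affine in each of its first `m` variables is, on the diagonal of these variables,
a polynomial of degree at most `m`. -/
lemma exists_poly_diag (f : (ℕ → ℂ) → ℂ) (m : ℕ)
    (hf : ∀ k < m, ∀ (y : ℕ → ℂ) (a : ℂ), f (Function.update y k a) =
      (1 - a) * f (Function.update y k 0) + a * f (Function.update y k 1)) (y : ℕ → ℂ) :
    ∃ p : Polynomial ℂ, p.natDegree ≤ m ∧
      ∀ a, f (fun k => if k < m then a else y k) = p.eval a := by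
  induction m generalizing y with
  | zero => exact ⟨Polynomial.C (f y), by simp, by simp⟩
  | succ m ih =>
    have ih' := ih (fun k hk => hf k (by omega))
    obtain ⟨p, hp, hpe⟩ := ih' (Function.update y m 0)
    obtain ⟨q, hq, hqe⟩ := ih' (Function.update y m 1)
    refine ⟨(1 - Polynomial.X) * p + Polynomial.X * q, by compute_degree; omega, fun a => ?_⟩
    have hcomm : ∀ c : ℂ, (fun k => if k < m then a else Function.update y m c k) =
        Function.update (fun k => if k < m then a else y k) m c := by
      intro c
      ext k
      by_cases hk : k = m
      · subst hk; simp
      · simp [Function.update_of_ne hk]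
    have hstep : (fun k => if k < m + 1 then a else y k) =
        Function.update (fun k => if k < m then a else y k) m a := by
      ext k
      by_cases hk : k = m
      · subst hk; simp
      · simp only [Function.update_of_ne hk]
        have : k < m + 1 ↔ k < m := by omega
        simp only [this]
    rw [hstep, hf m (by omega), ← hcomm, ← hcomm, hpe, hqe]
    simp

/-- The product `R_{t+k-1}(y_{k-1}) ⋯ R_t(y_0)` with an independent variable in each factor. -/
noncomputable def RprodVar (N : ℕ) (I : ℤ → ℤ → ℂ) (t : ℤ) (y : ℕ → ℂ) :
    ℕ → Matrix (Fin N) (Fin N) ℂ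
  | 0 => 1
  | k + 1 => Rtoda N I (t + k) (y k) * RprodVar N I t y k

lemma RprodVar_congr (N : ℕ) (I : ℤ → ℤ → ℂ) (t : ℤ) (y y' : ℕ → ℂ) (m : ℕ)
    (h : ∀ k < m, y k = y' k) : RprodVar N I t y m = RprodVar N I t y' m := by
  induction m with
  | zero => rfl
  | succ m ih =>
    simp only [RprodVar]
    rw [h m (by omega), ih (fun k hk => h k (by omega))]

lemma RprodVar_const (N : ℕ) (I : ℤ → ℤ → ℂ) (t : ℤ) (a : ℂ) (m : ℕ) :
    RprodVar N I t (fun _ => a) m = Rprod N I t a m := by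
  induction m with
  | zero => rfl
  | succ m ih => simp only [RprodVar, Rprod, ih]

lemma Rtoda_eq_s15 (N : ℕ) (I : ℤ → ℤ → ℂ) (s : ℤ) (a : ℂ) :
    Rtoda N I s a = Rtoda N I s 0 + a • vecMulVec (fun i : Fin N => if (i : ℕ) = N - 1 then 1 else 0)
      (fun j : Fin N => if (j : ℕ) = 0 then 1 else 0) := by
  ext i j
  simp only [Rtoda, Matrix.add_apply, Matrix.smul_apply, vecMulVec_apply, smul_eq_mul, ite_self,
    add_zero, ite_and]
  split_ifs <;> simp

/-- In Lean `V / 0 = 0`, so `Ltoda N V t 0` is the matrix `L_t` without its corner entry. -/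
lemma Ltoda_eq_s15 (N : ℕ) (V : ℤ → ℤ → ℂ) (t : ℤ) (a : ℂ) :
    Ltoda N V t a = Ltoda N V t 0 +
      a⁻¹ • vecMulVec (fun i : Fin N => if (i : ℕ) = 0 then 1 else 0)
        (fun j : Fin N => if (j : ℕ) = N - 1 then V N t else 0) := by
  ext i j
  simp only [Ltoda, Matrix.add_apply, Matrix.smul_apply, vecMulVec_apply, smul_eq_mul, ite_self,
    add_zero, ite_and, div_zero]
  split_ifs <;> simp [div_eq_inv_mul]

lemma RprodVar_update (N : ℕ) (I : ℤ → ℤ → ℂ) (t : ℤ) (y : ℕ → ℂ) (m k : ℕ) (hk : k < m) :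
    ∃ (A : Matrix (Fin N) (Fin N) ℂ) (u v : Fin N → ℂ), ∀ a : ℂ,
      RprodVar N I t (Function.update y k a) m = A + a • vecMulVec u v := by
  induction m with
  | zero => omega
  | succ m ih =>
    rcases Nat.lt_succ_iff_lt_or_eq.mp hk with hlt | rfl
    · obtain ⟨A, u, v, h⟩ := ih hlt
      refine ⟨Rtoda N I (t + m) (y m) * A, Rtoda N I (t + m) (y m) *ᵥ u, v, fun a => ?_⟩
      simp only [RprodVar]
      rw [h a, Function.update_of_ne (by omega), Matrix.mul_add, Matrix.mul_smul, mul_vecMulVec]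
    · refine ⟨Rtoda N I (t + k) 0 * RprodVar N I t y k,
        fun i : Fin N => if (i : ℕ) = N - 1 then 1 else 0,
        (fun j : Fin N => if (j : ℕ) = 0 then 1 else 0) ᵥ* RprodVar N I t y k, fun a => ?_⟩
      simp only [RprodVar]
      rw [Function.update_self, RprodVar_congr N I t (Function.update y k a) y k
        (fun j hj => Function.update_of_ne (by omega) _ _), Rtoda_eq_s15, Matrix.add_mul,
        Matrix.smul_mul, vecMulVec_mul]

lemma exists_poly_coeff_mul_Rprod (N M : ℕ) (I : ℤ → ℤ → ℂ) (t : ℤ)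
    (B : Matrix (Fin N) (Fin N) ℂ) (i : ℕ) :
    ∃ p : Polynomial ℂ, p.natDegree ≤ M ∧
      ∀ a, (B * Rprod N I t a M).charpoly.coeff i = p.eval a := by
  obtain ⟨p, hp, hpe⟩ := exists_poly_diag
    (fun y => (B * RprodVar N I t y M).charpoly.coeff i) M (by
      intro k hk y a
      obtain ⟨A, u, v, h⟩ := RprodVar_update N I t y M k hk
      simp only [h, Matrix.mul_add, Matrix.mul_smul, mul_vecMulVec, zero_smul, add_zero, one_smul]
      exact coeff_charpoly_add_smul _ _ _ _ _) 0
  refine ⟨p, hp, fun a => ?_⟩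
  rw [← hpe a, ← RprodVar_const]
  rw [RprodVar_congr N I t (fun _ => a) _ M (fun k hk => (if_pos hk).symm)]

lemma exists_poly_coeff (N M : ℕ) (I V : ℤ → ℤ → ℂ) (t : ℤ) (i : ℕ) :
    ∃ p : Polynomial ℂ, p.natDegree ≤ M + 1 ∧
      ∀ y, y ≠ 0 → y * (Xtoda N M I V t y).charpoly.coeff i = p.eval y := by
  obtain ⟨p, hp, hpe⟩ := exists_poly_coeff_mul_Rprod N M I t (Ltoda N V t 0) i
  obtain ⟨q, hq, hqe⟩ := exists_poly_coeff_mul_Rprod N M I t (Ltoda N V t 1) i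
  -- `y * ((1 - y⁻¹) p(y) + y⁻¹ q(y)) = (y - 1) p(y) + q(y)`
  refine ⟨(Polynomial.X - 1) * p + q, by compute_degree; omega, fun y hy => ?_⟩
  have h1 := hqe y
  rw [Ltoda_eq_s15, inv_one, one_smul, Matrix.add_mul, vecMulVec_mul] at h1
  rw [Xtoda, Ltoda_eq_s15, Matrix.add_mul, Matrix.smul_mul, vecMulVec_mul, coeff_charpoly_add_smul,
    hpe y, h1]
  simp
  field_simp

/-- `y·det(X_t(y) − xE)` is a polynomial `G(x, Y)` (outer variable `x`,
inner variable `Y`), of degree at most `M+1` in `Y` and of degree `N` in `x` with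
coefficient of `x^N` equal to `(−1)^N·Y`. -/
theorem stmt15 (N M : ℕ) (hN : 0 < N) (hM : 0 < M) (I V : ℤ → ℤ → ℂ)
    (hIper : ∀ n t : ℤ, I (n + N) t = I n t) (hVper : ∀ n t : ℤ, V (n + N) t = V n t)
    (t : ℤ) :
    ∃ G : Polynomial (Polynomial ℂ),
      (∀ (x y : ℂ), y ≠ 0 →
        y * (Xtoda N M I V t y - x • (1 : Matrix (Fin N) (Fin N) ℂ)).det =
          Polynomial.eval y (Polynomial.eval (Polynomial.C x) G)) ∧
      (∀ i : ℕ, (G.coeff i).natDegree ≤ M + 1) ∧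
      G.natDegree = N ∧
      G.coeff N = Polynomial.C ((-1 : ℂ) ^ N) * Polynomial.X := by
  choose p hp hpe using exists_poly_coeff N M I V t
  have hlow : (∑ i ∈ Finset.range N, Polynomial.C (Polynomial.C ((-1 : ℂ) ^ N) * p i) *
      (Polynomial.X : Polynomial (Polynomial ℂ)) ^ i).degree < N := by
    refine (Polynomial.degree_sum_le _ _).trans_lt ((Finset.sup_lt_iff ?_).2 fun i hi => ?_)
    · exact WithBot.bot_lt_coe N
    · refine (Polynomial.degree_C_mul_X_pow_le _ _).trans_lt ?_
      exact_mod_cast Finset.mem_range.1 hi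
  have hne : Polynomial.C ((-1 : ℂ) ^ N) * Polynomial.X ≠ 0 :=
    mul_ne_zero (Polynomial.C_ne_zero.2 (pow_ne_zero _ (by norm_num))) Polynomial.X_ne_zero
  have hcoeff : ∀ j, ((∑ i ∈ Finset.range N, Polynomial.C (Polynomial.C ((-1 : ℂ) ^ N) * p i) *
      (Polynomial.X : Polynomial (Polynomial ℂ)) ^ i) +
      Polynomial.C (Polynomial.C ((-1 : ℂ) ^ N) * Polynomial.X) * Polynomial.X ^ N).coeff j =
      (if j < N then Polynomial.C ((-1 : ℂ) ^ N) * p j else 0) +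
      (if j = N then Polynomial.C ((-1 : ℂ) ^ N) * Polynomial.X else 0) := by
    intro j
    rw [Polynomial.coeff_add, Polynomial.finsetSum_coeff, Polynomial.coeff_C_mul_X_pow]
    simp only [Polynomial.coeff_C_mul_X_pow, Finset.sum_ite_eq, Finset.mem_range]
  refine ⟨_, ?_, fun j => ?_, ?_, (hcoeff N).trans (by simp)⟩
  · intro x y hy
    have hdet : (Xtoda N M I V t y - x • (1 : Matrix (Fin N) (Fin N) ℂ)).det =
        (-1) ^ N * (Xtoda N M I V t y).charpoly.eval x := by
      rw [Matrix.eval_charpoly, ← neg_sub, det_neg, Fintype.card_fin, scalar_apply,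
        smul_one_eq_diagonal]
    have hdeg : (Xtoda N M I V t y).charpoly.natDegree = N := by simp
    have hlead : (Xtoda N M I V t y).charpoly.coeff N = 1 := by
      have h := Matrix.charpoly_monic (Xtoda N M I V t y)
      rwa [Polynomial.Monic, Polynomial.leadingCoeff, hdeg] at h
    rw [hdet, Polynomial.eval_eq_sum_range, hdeg, Finset.sum_range_succ, hlead]
    simp only [Polynomial.eval_add, Polynomial.eval_finsetSum, Polynomial.eval_mul,
      Polynomial.eval_C, Polynomial.eval_pow, Polynomial.eval_X, ← hpe _ y hy]
    rw [mul_add, mul_add, Finset.mul_sum, Finset.mul_sum]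
    congr 1
    · exact Finset.sum_congr rfl fun i _ => by ring
    · ring
  · rw [hcoeff]
    split_ifs with h1 h2 h2
    · omega
    · rw [add_zero]
      exact (Polynomial.natDegree_C_mul_le _ _).trans (hp j)
    · rw [zero_add]
      exact (Polynomial.natDegree_C_mul_le _ _).trans (by simp)
    · simp
  · refine Polynomial.natDegree_eq_of_degree_eq_some ?_
    rw [Polynomial.degree_add_eq_right_of_degree_lt, Polynomial.degree_C_mul_X_pow _ hne]
    rwa [Polynomial.degree_C_mul_X_pow _ hne]
end
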